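/- arXiv:2404.06768 — 2 statements merged into one kernel-verified Lean document; each statement's English description precedes it below -/
import Mathlib

section
/- Let n = 2t be an even positive integer, s ≥ 1 an integer, and W_1, …, W_s pairwise disjoint t-dimensional F_3-linear subspaces of F_3^n, with f the associated characteristic function. Then the Hamming weights of the codewords c_{α,w} of C_f are: wt(c_{0,w}) = 2·3^{n−1} for every w ≠ 0; wt(c_{α,0}) = s(3^t − 1) for α ∈ {1, 2}; wt(c_{α,w}) = 2·3^{n−1} − s for α ∈ {1, 2} and every w with w ∉ W_k^⊥ for all 1 ≤ k ≤ s; and wt(c_{α,w}) = 2·3^{n−1} + 3^t − s for α ∈ {1, 2} and every nonzero w with w ∈ W_k^⊥ for some 1 ≤ k ≤ s. -/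
open Matrix Finset

lemma aux_fiber {V : Type*} [AddCommGroup V] [Module (ZMod 3) V] [Fintype V]
    (φ : V →ₗ[ZMod 3] ZMod 3) (hφ : ∃ x, φ x ≠ 0) (a : ZMod 3) :
    3 * (∑ x : V, if a + φ x ≠ 0 then (1 : ℤ) else 0) = 2 * Fintype.card V := by
  have hsurj : Function.Surjective φ := by
    obtain ⟨x, hx⟩ := hφ
    intro y
    exact ⟨(y * (φ x)⁻¹) • x, by simp [hx]⟩
  obtain ⟨v, hv⟩ := hsurj 1
  have shift : ∀ b : ZMod 3, (∑ x : V, if b + φ x ≠ 0 then (1 : ℤ) else 0)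
      = ∑ x : V, if (b + 1) + φ x ≠ 0 then (1 : ℤ) else 0 := by
    intro b
    rw [← Equiv.sum_comp (Equiv.addRight v)]
    refine Finset.sum_congr rfl fun x _ => ?_
    have : b + φ ((Equiv.addRight v) x) = (b + 1) + φ x := by
      simp [hv]; ring
    rw [this]
  have e1 := shift a
  have e2 := shift (a + 1)
  have tot : (∑ x : V, if a + φ x ≠ 0 then (1 : ℤ) else 0)
     + (∑ x : V, if (a + 1) + φ x ≠ 0 then (1 : ℤ) else 0)
     + (∑ x : V, if (a + 1 + 1) + φ x ≠ 0 then (1 : ℤ) else 0) = 2 * Fintype.card V := by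
    rw [← Finset.sum_add_distrib, ← Finset.sum_add_distrib]
    have : ∀ x : V, ((if a + φ x ≠ 0 then (1 : ℤ) else 0) + (if (a + 1) + φ x ≠ 0 then (1 : ℤ) else 0)
       + (if (a + 1 + 1) + φ x ≠ 0 then (1 : ℤ) else 0)) = 2 := by
      intro x
      generalize φ x = b
      clear e1 e2
      revert a b
      decide
    rw [Finset.sum_congr rfl fun x _ => this x]
    simp [mul_comm]
  linarith

/-- dot product with `w` as a linear functional -/
def dotL {n : ℕ} (w : Fin n → ZMod 3) : (Fin n → ZMod 3) →ₗ[ZMod 3] ZMod 3 where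
  toFun x := w ⬝ᵥ x
  map_add' x y := dotProduct_add w x y
  map_smul' c x := by simp

lemma aux_total {n : ℕ} (hn : 1 ≤ n) (w : Fin n → ZMod 3) (hw : w ≠ 0) :
    (∑ x : Fin n → ZMod 3, if w ⬝ᵥ x ≠ 0 then (1 : ℤ) else 0) = 2 * 3 ^ (n - 1) := by
  have h := aux_fiber (dotL w) (by
    by_contra! h
    exact hw (dotProduct_eq_zero w h)) 0
  have hc : ((Fintype.card (Fin n → ZMod 3) : ℕ) : ℤ) = 3 * 3 ^ (n - 1) := by
    rw [← pow_succ', Nat.sub_add_cancel hn]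
    simp [ZMod.card]
  rw [hc] at h
  simp only [zero_add] at h
  change 3 * (∑ x : Fin n → ZMod 3, if w ⬝ᵥ x ≠ 0 then (1 : ℤ) else 0) = _ at h
  linarith

lemma aux_wt {n : ℕ} (g : (Fin n → ZMod 3) → ZMod 3) (hg : g 0 = 0) :
    ((hammingNorm (fun x : {x : Fin n → ZMod 3 // x ≠ 0} => g x.1) : ℕ) : ℤ)
      = ∑ x, if g x ≠ 0 then (1 : ℤ) else 0 := by
  unfold hammingNorm
  rw [Finset.card_filter]
  push_cast
  rw [← Finset.sum_subset (Finset.filter_subset (fun x : Fin n → ZMod 3 => x ≠ 0) univ)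
    (by
      intro x _ hx
      have hx : x = 0 := by simpa using hx
      simp [hx, hg])]
  rw [Finset.sum_subtype (p := fun x : Fin n → ZMod 3 => x ≠ 0) _ (by simp)]

open Classical in
lemma aux_sub {n t : ℕ} (W : Submodule (ZMod 3) (Fin n → ZMod 3))
    (hdim : Module.finrank (ZMod 3) W = t) (α : ZMod 3) (hα : α ≠ 0) (w : Fin n → ZMod 3) :
    (∑ x : Fin n → ZMod 3, if x ∈ W then ((if α + w ⬝ᵥ x ≠ 0 then (1 : ℤ) else 0)
      - (if w ⬝ᵥ x ≠ 0 then (1 : ℤ) else 0) - (if x = 0 then 1 else 0)) else 0)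
      = (if ∀ x ∈ W, w ⬝ᵥ x = 0 then 3 ^ t else 0) - 1 := by
  have hc : ((Fintype.card W : ℕ) : ℤ) = 3 ^ t := by
    rw [Module.card_eq_pow_finrank (K := ZMod 3), hdim]; simp [ZMod.card]
  rw [← Finset.sum_filter, Finset.sum_subtype (p := fun x => x ∈ W) _ (by simp)]
  rw [Finset.sum_sub_distrib, Finset.sum_sub_distrib]
  have h0 : (∑ x : W, if (x : Fin n → ZMod 3) = 0 then (1 : ℤ) else 0) = 1 := by
    simp
  rw [h0]
  split_ifs with h
  · have : ∀ x : W, w ⬝ᵥ (x : Fin n → ZMod 3) = 0 := fun x => h x x.2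
    simp [this, hα, hc]
  · push Not at h
    obtain ⟨x, hx, hx'⟩ := h
    have hex : ∃ x : W, (dotL w ∘ₗ W.subtype) x ≠ 0 := ⟨⟨x, hx⟩, hx'⟩
    have h1 := aux_fiber (dotL w ∘ₗ W.subtype) hex α
    have h2 := aux_fiber (dotL w ∘ₗ W.subtype) hex 0
    simp only [zero_add] at h2
    change 3 * (∑ x : W, if α + w ⬝ᵥ (x : Fin n → ZMod 3) ≠ 0 then (1 : ℤ) else 0) = _ at h1
    change 3 * (∑ x : W, if w ⬝ᵥ (x : Fin n → ZMod 3) ≠ 0 then (1 : ℤ) else 0) = _ at h2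
    linarith

open Classical in
lemma aux_main (t n s : ℕ)
    (W : Fin s → Submodule (ZMod 3) (Fin n → ZMod 3))
    (hdim : ∀ k, Module.finrank (ZMod 3) (W k) = t)
    (hdisj : ∀ i j, i ≠ j → W i ⊓ W j = ⊥)
    (f : (Fin n → ZMod 3) → ZMod 3)
    (hf1 : ∀ (x : Fin n → ZMod 3) (k : Fin s), x ≠ 0 → x ∈ W k → f x = 1)
    (hf0 : ∀ x : Fin n → ZMod 3, (x = 0 ∨ ∀ k, x ∉ W k) → f x = 0)
    (α : ZMod 3) (hα : α ≠ 0) (w : Fin n → ZMod 3) :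
    ((hammingNorm (fun x : {x : Fin n → ZMod 3 // x ≠ 0} => α * f x.1 + w ⬝ᵥ x.1) : ℕ) : ℤ)
      = (∑ x : Fin n → ZMod 3, if w ⬝ᵥ x ≠ 0 then (1 : ℤ) else 0)
        + ∑ k, ((if ∀ x ∈ W k, w ⬝ᵥ x = 0 then 3 ^ t else 0) - 1) := by
  rw [aux_wt (fun x => α * f x + w ⬝ᵥ x) (by simp [hf0 0 (Or.inl rfl)])]
  rw [← Finset.sum_congr rfl fun k _ => aux_sub (W k) (hdim k) α hα w]
  rw [Finset.sum_comm, ← Finset.sum_add_distrib]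
  refine Finset.sum_congr rfl fun x _ => ?_
  by_cases hx : x = 0
  · subst hx
    simp [hf0 0 (Or.inl rfl), hα]
  by_cases hk : ∃ k, x ∈ W k
  · obtain ⟨k, hk⟩ := hk
    rw [Finset.sum_eq_single k]
    · simp [hf1 x k hx hk, hk, hx]
    · intro j _ hj
      rw [if_neg]
      intro hxj
      have : x ∈ W j ⊓ W k := ⟨hxj, hk⟩
      rw [hdisj j k hj] at this
      exact hx (by simpa using this)
    · simp
  · push Not at hk
    simp [hf0 x (Or.inr hk), hk]

lemma aux_unique {t n : ℕ} (ht : n = 2 * t) (U V : Submodule (ZMod 3) (Fin n → ZMod 3))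
    (hU : Module.finrank (ZMod 3) U = t) (hV : Module.finrank (ZMod 3) V = t)
    (hd : U ⊓ V = ⊥) (w : Fin n → ZMod 3) (h1 : ∀ x ∈ U, w ⬝ᵥ x = 0)
    (h2 : ∀ x ∈ V, w ⬝ᵥ x = 0) : w = 0 := by
  have h := Submodule.finrank_sup_add_finrank_inf_eq U V
  rw [hd, hU, hV, finrank_bot] at h
  have htop : U ⊔ V = ⊤ := Submodule.eq_top_of_finrank_eq (by simp; omega)
  have hk : U ⊔ V ≤ LinearMap.ker (dotL w) := sup_le h1 h2
  rw [htop] at hk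
  exact dotProduct_eq_zero w fun v => hk (Submodule.mem_top (x := v))

theorem stmt10 (t n s : ℕ) (ht : n = 2 * t) (ht1 : 1 ≤ t) (hs : 1 ≤ s)
    (W : Fin s → Submodule (ZMod 3) (Fin n → ZMod 3))
    (hdim : ∀ k, Module.finrank (ZMod 3) (W k) = t)
    (hdisj : ∀ i j, i ≠ j → W i ⊓ W j = ⊥)
    (f : (Fin n → ZMod 3) → ZMod 3)
    (hf1 : ∀ (x : Fin n → ZMod 3) (k : Fin s), x ≠ 0 → x ∈ W k → f x = 1)
    (hf0 : ∀ x : Fin n → ZMod 3, (x = 0 ∨ ∀ k, x ∉ W k) → f x = 0)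
    :
    ∀ (α : ZMod 3) (w : Fin n → ZMod 3),
      (α = 0 → w ≠ 0 →
        hammingNorm (fun x : {x : Fin n → ZMod 3 // x ≠ 0} => α * f x.1 + w ⬝ᵥ x.1) = 2 * 3 ^ (n - 1)) ∧
      ((α = 1 ∨ α = 2) → w = 0 →
        hammingNorm (fun x : {x : Fin n → ZMod 3 // x ≠ 0} => α * f x.1 + w ⬝ᵥ x.1) = s * (3 ^ t - 1)) ∧
      ((α = 1 ∨ α = 2) → (∀ k, ∃ x ∈ W k, w ⬝ᵥ x ≠ 0) →
        hammingNorm (fun x : {x : Fin n → ZMod 3 // x ≠ 0} => α * f x.1 + w ⬝ᵥ x.1) = 2 * 3 ^ (n - 1) - s) ∧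
      ((α = 1 ∨ α = 2) → w ≠ 0 → (∃ k, ∀ x ∈ W k, w ⬝ᵥ x = 0) →
        hammingNorm (fun x : {x : Fin n → ZMod 3 // x ≠ 0} => α * f x.1 + w ⬝ᵥ x.1) = 2 * 3 ^ (n - 1) + 3 ^ t - s) := by
  classical
  intro α w
  have hα0 : (α = 1 ∨ α = 2) → α ≠ 0 := by
    rintro (rfl | rfl) <;> decide
  have main := fun h => aux_main t n s W hdim hdisj f hf1 hf0 α (hα0 h) w
  refine ⟨?_, ?_, ?_, ?_⟩
  · intro hα hw
    have h := aux_wt (fun x => α * f x + w ⬝ᵥ x) (by simp [hα])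
    have h2 := aux_total (by omega) w hw
    simp only [hα, zero_mul, zero_add] at h ⊢
    rw [h2] at h
    exact_mod_cast h
  · intro hα hw
    have h := main hα
    zify [Nat.one_le_pow t 3 (by norm_num)]
    rw [h]
    simp [hw]
    ring
  · intro hα hw
    have h := main hα
    have hw0 : w ≠ 0 := by
      rintro rfl
      obtain ⟨x, _, hx⟩ := hw ⟨0, hs⟩
      simp at hx
    rw [aux_total (by omega) w hw0] at h
    have hneg : ∀ k, ¬ ∀ x ∈ W k, w ⬝ᵥ x = 0 := by
      intro k hk
      obtain ⟨x, hx, hx'⟩ := hw k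
      exact hx' (hk x hx)
    simp only [hneg, if_false] at h
    simp only [zero_sub, sum_const, card_univ, Fintype.card_fin, smul_neg, nsmul_eq_mul, mul_one] at h
    apply Nat.eq_sub_of_add_eq
    zify
    linarith
  · intro hα hw0 ⟨k, hk⟩
    have h := main hα
    rw [aux_total (by omega) w hw0] at h
    have hiff : ∀ j, (∀ x ∈ W j, w ⬝ᵥ x = 0) ↔ j = k := by
      intro j
      constructor
      · intro hj
        by_contra hne
        exact hw0 (aux_unique ht (W j) (W k) (hdim j) (hdim k) (hdisj j k hne) w hj hk)
      · rintro rfl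
        exact hk
    simp only [hiff] at h
    rw [Finset.sum_sub_distrib] at h
    simp only [sum_ite_eq', mem_univ, if_true, sum_const, card_univ, Fintype.card_fin, nsmul_eq_mul, mul_one] at h
    apply Nat.eq_sub_of_add_eq
    zify
    linarith
end

section
/- Let n be a positive integer and let f : F_3^n → F_3 be a function with f(0) = 0. Then for every w ∈ F_3^n: wt(c_{0,w}) = 2·3^{n−1} whenever w ≠ 0, and for every α ∈ {1, 2} ⊆ F_3, the Hamming weight of c_{α,w} satisfies wt(c_{α,w}) = 2(3^{n−1} − Re(f̂(−α^{−1}w))/3) as an equality of real numbers (in particular, for α = 1 the weight is 2(3^{n−1} − Re(f̂(−w))/3) and for α = 2 it is 2(3^{n−1} − Re(f̂(w))/3)). -/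
open Matrix Finset

theorem aux_norm (n : ℕ) (g : (Fin n → ZMod 3) → ZMod 3) (h0 : g 0 = 0) :
    hammingNorm (fun x : {x : Fin n → ZMod 3 // x ≠ 0} => g x.1) =
      ∑ x : Fin n → ZMod 3, if g x ≠ 0 then 1 else 0 := by
  rw [← Finset.card_filter]
  unfold hammingNorm
  refine Finset.card_bij (fun x _ => x.1) ?_ ?_ ?_
  · intro a ha
    simpa using ha
  · intro a _ b _ h
    exact Subtype.ext h
  · intro b hb
    have hb' : g b ≠ 0 := by simpa using hb
    exact ⟨⟨b, fun h => hb' (by rw [h, h0])⟩, by simpa using hb', rfl⟩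

theorem aux_re (v : ZMod 3) :
    (Complex.exp (2 * Real.pi * Complex.I / 3) ^ v.val).re =
      1 - (3 / 2) * (((if v ≠ 0 then 1 else 0 : ℕ)) : ℝ) := by
  have hz : Complex.exp (2 * Real.pi * Complex.I / 3) =
      Complex.exp (((2 * Real.pi / 3 : ℝ) : ℂ) * Complex.I) := by
    congr 1
    push_cast
    ring
  have hc : Real.cos (2 * Real.pi / 3) = -1 / 2 := by
    rw [show 2 * Real.pi / 3 = Real.pi - Real.pi / 3 by ring, Real.cos_pi_sub,
      Real.cos_pi_div_three]
    norm_num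
  have hs := Real.sin_sq_add_cos_sq (2 * Real.pi / 3)
  have h1 : (Complex.exp (((2 * Real.pi / 3 : ℝ) : ℂ) * Complex.I)).re = -1 / 2 := by
    rw [Complex.exp_ofReal_mul_I_re, hc]
  have h2 := Complex.exp_ofReal_mul_I_im (2 * Real.pi / 3)
  rw [hz]
  have hv : v = 0 ∨ v = 1 ∨ v = 2 := by revert v; decide
  rcases hv with rfl | rfl | rfl
  · simp
  · have e : (1 : ZMod 3).val = 1 := rfl
    have e' : (1 : ZMod 3) ≠ 0 := by decide
    rw [e, if_pos e', pow_one, h1]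
    norm_num
  · have e : (2 : ZMod 3).val = 2 := rfl
    have e' : (2 : ZMod 3) ≠ 0 := by decide
    rw [e, if_pos e', pow_two, Complex.mul_re, h1, h2]
    rw [hc] at hs
    push_cast
    nlinarith

theorem aux_lin (n : ℕ) (hn : 1 ≤ n) (w : Fin n → ZMod 3) (hw : w ≠ 0) :
    (∑ x : Fin n → ZMod 3, if w ⬝ᵥ x ≠ 0 then 1 else 0) = 2 * 3 ^ (n - 1) := by
  obtain ⟨i, hi⟩ := Function.ne_iff.mp hw
  have hi' : w i ≠ 0 := hi
  have he : w ⬝ᵥ Pi.single i (w i)⁻¹ = 1 := by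
    rw [dotProduct_single, mul_inv_cancel₀ hi']
  set e : Fin n → ZMod 3 := Pi.single i (w i)⁻¹
  have h1 := Equiv.sum_comp (Equiv.addRight e)
    (fun x : Fin n → ZMod 3 => if w ⬝ᵥ x ≠ 0 then 1 else 0)
  have h2 := Equiv.sum_comp (Equiv.addRight (e + e))
    (fun x : Fin n → ZMod 3 => if w ⬝ᵥ x ≠ 0 then 1 else 0)
  simp only [Equiv.coe_addRight, dotProduct_add, he] at h1 h2
  have key : ∀ a : ZMod 3, (if a ≠ 0 then 1 else 0) + (if a + 1 ≠ 0 then 1 else 0)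
      + (if a + (1 + 1) ≠ 0 then 1 else 0) = 2 := by decide
  have h3 : ∑ x : Fin n → ZMod 3, ((if w ⬝ᵥ x ≠ 0 then 1 else 0)
      + (if w ⬝ᵥ x + 1 ≠ 0 then 1 else 0) + (if w ⬝ᵥ x + (1 + 1) ≠ 0 then 1 else 0))
      = 3 ^ n * 2 := by
    rw [Finset.sum_congr rfl (fun x _ => key (w ⬝ᵥ x))]
    simp [ZMod.card]
  rw [Finset.sum_add_distrib, Finset.sum_add_distrib, h1, h2] at h3
  obtain ⟨m, rfl⟩ : ∃ m, n = m + 1 := ⟨n - 1, by omega⟩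
  rw [pow_succ] at h3
  rw [Nat.add_sub_cancel]
  omega

theorem stmt16 (n : ℕ) (hn : 1 ≤ n)
    (f : (Fin n → ZMod 3) → ZMod 3) (hf0 : f 0 = 0)
    (walsh : (Fin n → ZMod 3) → ℂ)
    (hwalsh : ∀ w : Fin n → ZMod 3, walsh w = ∑ x : Fin n → ZMod 3,
      Complex.exp (2 * Real.pi * Complex.I / 3) ^ ((f x - w ⬝ᵥ x).val))
    :
    ∀ w : Fin n → ZMod 3,
      (w ≠ 0 →
        hammingNorm (fun x : {x : Fin n → ZMod 3 // x ≠ 0} =>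
          (0 : ZMod 3) * f x.1 + w ⬝ᵥ x.1) = 2 * 3 ^ (n - 1)) ∧
      (∀ α : ZMod 3, α = 1 ∨ α = 2 →
        (hammingNorm (fun x : {x : Fin n → ZMod 3 // x ≠ 0} => α * f x.1 + w ⬝ᵥ x.1) : ℝ) =
          2 * (3 ^ (n - 1) - (walsh ((-α⁻¹) • w)).re / 3)) := by
  intro w
  constructor
  · intro hw
    rw [aux_norm n (fun x => (0 : ZMod 3) * f x + w ⬝ᵥ x) (by simp)]
    simp only [zero_mul, zero_add]
    exact aux_lin n hn w hw
  · intro α hα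
    rw [aux_norm n (fun x => α * f x + w ⬝ᵥ x) (by simp [hf0]), hwalsh, Complex.re_sum]
    have key : ∀ a b : ZMod 3, (α * a + b ≠ 0) ↔ (a - (-α⁻¹) * b ≠ 0) := by
      intro a b
      have h0 : α ≠ 0 := by rcases hα with rfl | rfl <;> decide
      have h1 : α * a + b = α * (a - (-α⁻¹) * b) := by
        field_simp
        ring
      rw [h1]
      simp only [ne_eq, mul_eq_zero, h0, false_or]
    simp only [aux_re, smul_dotProduct, smul_eq_mul, ← key]
    rw [Finset.sum_sub_distrib, ← Finset.mul_sum, ← Nat.cast_sum]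
    obtain ⟨m, rfl⟩ : ∃ m, n = m + 1 := ⟨n - 1, by omega⟩
    simp only [Finset.sum_const, Finset.card_univ, Fintype.card_pi, ZMod.card,
      Finset.prod_const, Fintype.card_fin, nsmul_eq_mul, mul_one, Nat.add_sub_cancel, pow_succ]
    push_cast
    ring
end
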